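/- arXiv:2502.16042 — 2 statements merged into one kernel-verified Lean document; each statement's English description precedes it below -/
import Mathlib

section
/- Let (X,Y) be a bivariate normal random vector where X and Y each have the standard normal distribution N(0,1) and Corr(X,Y) = ρ with ρ ∈ [−1,1]. Then for all a, b ∈ ℝ, Cov(1{X ≤ a}, 1{Y ≤ b}) = ∫₀^ρ (2π√(1−r²))⁻¹ exp(−(a² + b² − 2 r a b)/(2(1−r²))) dr. -/
open MeasureTheory ProbabilityTheory Matrix Real
open scoped BigOperators ENNReal NNReal

noncomputable section

/-- Covariance of two real random variables on a measure space. -/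
def cov {Ω : Type*} [MeasureSpace Ω] (U V : Ω → ℝ) : ℝ :=
  (∫ ω, U ω * V ω) - (∫ ω, U ω) * (∫ ω, V ω)

def gPhi (t : ℝ) : ℝ := (gaussianReal 0 1).real (Set.Iic t)

def gF (a b ρ : ℝ) : ℝ :=
  ∫ z, (if z.1 ≤ a then (1 : ℝ) else 0) *
    (if ρ * z.1 + Real.sqrt (1 - ρ ^ 2) * z.2 ≤ b then (1 : ℝ) else 0)
    ∂((gaussianReal 0 1).prod (gaussianReal 0 1))

lemma gPhi_eq (t : ℝ) : gPhi t = ∫ x in Set.Iic t, gaussianPDFReal 0 1 x := by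
  unfold gPhi Measure.real
  rw [gaussianReal_apply_eq_integral 0 one_ne_zero, ENNReal.toReal_ofReal]
  exact integral_nonneg (fun x => gaussianPDFReal_nonneg _ _ _)

lemma gpdf_cont : Continuous (gaussianPDFReal 0 1) := by
  rw [gaussianPDFReal_def]; fun_prop

lemma gPhi_deriv (t : ℝ) : HasDerivAt gPhi (gaussianPDFReal 0 1 t) t := by
  have h : gPhi = fun u => gPhi 0 + ∫ x in (0:ℝ)..u, gaussianPDFReal 0 1 x := by
    funext u
    rw [gPhi_eq, gPhi_eq, ← intervalIntegral.integral_Iic_sub_Iic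
      (integrable_gaussianPDFReal 0 1).integrableOn (integrable_gaussianPDFReal 0 1).integrableOn]
    ring
  rw [h]
  exact (intervalIntegral.integral_hasDerivAt_right
    (gpdf_cont.intervalIntegrable _ _)
    (gpdf_cont.stronglyMeasurableAtFilter _ _) gpdf_cont.continuousAt).const_add _

lemma g_ite_le (μ : Measure ℝ) (t : ℝ) :
    ∫ x, (if x ≤ t then (1 : ℝ) else 0) ∂μ = μ.real (Set.Iic t) := by
  have : (fun x : ℝ => if x ≤ t then (1 : ℝ) else 0) = (Set.Iic t).indicator 1 := by
    funext x; simp [Set.indicator_apply]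
  rw [this, integral_indicator_one measurableSet_Iic]

lemma g_law (ρ : ℝ) (hρ : ρ ∈ Set.Icc (-1 : ℝ) 1) :
    Measure.map (fun z : ℝ × ℝ => ρ * z.1 + Real.sqrt (1 - ρ ^ 2) * z.2)
        ((gaussianReal 0 1).prod (gaussianReal 0 1)) = gaussianReal 0 1 := by
  have hs : (0:ℝ) ≤ 1 - ρ ^ 2 := by nlinarith [hρ.1, hρ.2]
  have hi : IndepFun (fun z : ℝ × ℝ => ρ * z.1) (fun z => Real.sqrt (1 - ρ ^ 2) * z.2)
      ((gaussianReal 0 1).prod (gaussianReal 0 1)) :=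
    indepFun_prod (X := fun x : ℝ => ρ * x) (Y := fun x : ℝ => Real.sqrt (1 - ρ ^ 2) * x)
      (by fun_prop) (by fun_prop)
  have h1 : Measure.map (fun z : ℝ × ℝ => ρ * z.1) ((gaussianReal 0 1).prod (gaussianReal 0 1))
      = gaussianReal (ρ * 0) (.mk (ρ ^ 2) (sq_nonneg _) * 1) := by
    rw [← gaussianReal_map_const_mul]
    have : (fun z : ℝ × ℝ => ρ * z.1) = (ρ * ·) ∘ Prod.fst := rfl
    rw [this, ← Measure.map_map (by fun_prop) (by fun_prop), Measure.map_fst_prod]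
    simp
  have h2 : Measure.map (fun z : ℝ × ℝ => Real.sqrt (1 - ρ ^ 2) * z.2)
      ((gaussianReal 0 1).prod (gaussianReal 0 1))
      = gaussianReal (Real.sqrt (1 - ρ ^ 2) * 0)
        (.mk (Real.sqrt (1 - ρ ^ 2) ^ 2) (sq_nonneg _) * 1) := by
    rw [← gaussianReal_map_const_mul]
    have : (fun z : ℝ × ℝ => Real.sqrt (1 - ρ ^ 2) * z.2)
      = (Real.sqrt (1 - ρ ^ 2) * ·) ∘ Prod.snd := rfl
    rw [this, ← Measure.map_map (by fun_prop) (by fun_prop), Measure.map_snd_prod]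
    simp
  have h := gaussianReal_add_gaussianReal_of_indepFun hi h1 h2
  have e : (fun z : ℝ × ℝ => ρ * z.1 + Real.sqrt (1 - ρ ^ 2) * z.2)
    = (fun z : ℝ × ℝ => ρ * z.1) + (fun z => Real.sqrt (1 - ρ ^ 2) * z.2) := rfl
  rw [e, h]
  congr 1
  · ring
  · apply NNReal.eq
    push_cast
    simp [Real.sq_sqrt hs]

lemma g_meas (a b ρ : ℝ) : Measurable (fun z : ℝ × ℝ => (if z.1 ≤ a then (1 : ℝ) else 0) *
    (if ρ * z.1 + Real.sqrt (1 - ρ ^ 2) * z.2 ≤ b then (1 : ℝ) else 0)) := by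
  apply Measurable.mul
  · exact Measurable.ite (measurableSet_le (by fun_prop) (by fun_prop)) (by fun_prop) (by fun_prop)
  · exact Measurable.ite (measurableSet_le (by fun_prop) (by fun_prop)) (by fun_prop) (by fun_prop)

lemma g_bd (a b ρ : ℝ) (z : ℝ × ℝ) : ‖(if z.1 ≤ a then (1 : ℝ) else 0) *
    (if ρ * z.1 + Real.sqrt (1 - ρ ^ 2) * z.2 ≤ b then (1 : ℝ) else 0)‖ ≤ 1 := by
  split_ifs <;> simp

lemma gF_cont (a b : ℝ) : ContinuousOn (gF a b) (Set.Icc (-1) 1) := by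
  intro ρ hρ
  unfold gF
  apply ContinuousAt.continuousWithinAt
  apply continuousAt_of_dominated (bound := fun _ => 1)
  · exact Filter.Eventually.of_forall fun r => (g_meas a b r).aestronglyMeasurable
  · exact Filter.Eventually.of_forall fun r => ae_of_all _ (g_bd a b r)
  · exact integrable_const _
  · have h0 : ∀ᵐ y ∂(Measure.map (fun z : ℝ × ℝ => ρ * z.1 + Real.sqrt (1 - ρ ^ 2) * z.2)
        ((gaussianReal 0 1).prod (gaussianReal 0 1))), y ≠ b := by
      rw [g_law ρ hρ]
      apply (gaussianReal_absolutelyContinuous 0 one_ne_zero).ae_le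
      exact Measure.ae_ne volume b
    have h1 := ae_of_ae_map (by fun_prop) h0
    filter_upwards [h1] with z hz
    apply ContinuousAt.mul continuousAt_const
    have hc : ContinuousAt (fun r : ℝ => r * z.1 + Real.sqrt (1 - r ^ 2) * z.2) ρ := by fun_prop
    rcases lt_or_gt_of_ne hz with h | h
    · have : (fun r : ℝ => if r * z.1 + Real.sqrt (1 - r ^ 2) * z.2 ≤ b then (1 : ℝ) else 0)
          =ᶠ[nhds ρ] fun _ => 1 := by
        filter_upwards [hc.eventually_lt_const h] with r hr
        simp [hr.le]
      exact continuousAt_const.congr this.symm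
    · have : (fun r : ℝ => if r * z.1 + Real.sqrt (1 - r ^ 2) * z.2 ≤ b then (1 : ℝ) else 0)
          =ᶠ[nhds ρ] fun _ => 0 := by
        filter_upwards [hc.eventually_const_lt h] with r hr
        simp [hr]
      exact continuousAt_const.congr this.symm

lemma gF_eq (a b ρ : ℝ) (hρ : ρ ∈ Set.Ioo (-1 : ℝ) 1) :
    gF a b ρ = ∫ x in Set.Iic a, gPhi ((b - ρ * x) / Real.sqrt (1 - ρ ^ 2)) ∂(gaussianReal 0 1) := by
  have hs : 0 < Real.sqrt (1 - ρ ^ 2) := Real.sqrt_pos.2 (by nlinarith [hρ.1, hρ.2])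
  unfold gF
  rw [integral_prod _ (Integrable.of_bound (g_meas a b ρ).aestronglyMeasurable 1
    (ae_of_all _ (g_bd a b ρ))), ← integral_indicator measurableSet_Iic]
  congr 1
  funext x
  refine (integral_const_mul (if x ≤ a then (1 : ℝ) else 0) _).trans ?_
  have : ∀ y : ℝ, ρ * x + Real.sqrt (1 - ρ ^ 2) * y ≤ b ↔
      y ≤ (b - ρ * x) / Real.sqrt (1 - ρ ^ 2) := by
    intro y
    rw [le_div_iff₀ hs]
    constructor <;> intro h <;> linarith
  simp_rw [this]
  rw [g_ite_le]
  by_cases hx : x ≤ a <;> simp [hx, gPhi]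

lemma g_inner_deriv (b x r : ℝ) (hr : r ∈ Set.Ioo (-1 : ℝ) 1) :
    HasDerivAt (fun r : ℝ => (b - r * x) / Real.sqrt (1 - r ^ 2))
      ((b * r - x) / Real.sqrt (1 - r ^ 2) ^ 3) r := by
  have h0 : 0 < 1 - r ^ 2 := by nlinarith [hr.1, hr.2]
  have hs : 0 < Real.sqrt (1 - r ^ 2) := Real.sqrt_pos.2 h0
  have h1 : HasDerivAt (fun r : ℝ => b - r * x) (-x) r := by
    simpa using ((hasDerivAt_id r).mul_const x).const_sub b
  have h2 : HasDerivAt (fun r : ℝ => 1 - r ^ 2) (-(2 * r)) r := by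
    simpa using (hasDerivAt_pow 2 r).const_sub 1
  refine (h1.div (h2.sqrt h0.ne') hs.ne').congr_deriv ?_
  have hq := Real.sq_sqrt h0.le
  set s := Real.sqrt (1 - r ^ 2)
  field_simp
  have : s ^ 2 = 1 - r ^ 2 := hq
  rw [this]; ring

lemma gpdf_le (u : ℝ) : gaussianPDFReal 0 1 u ≤ 1 := by
  rw [gaussianPDFReal_def]
  simp only [NNReal.coe_one, mul_one, sub_zero]
  have h1 : (√(2 * π))⁻¹ ≤ 1 := by
    apply inv_le_one_of_one_le₀
    rw [Real.one_le_sqrt]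
    nlinarith [Real.pi_gt_three]
  have h2 : rexp (-u ^ 2 / 2) ≤ 1 := Real.exp_le_one_iff.2 (by nlinarith [sq_nonneg u])
  exact mul_le_one₀ h1 (Real.exp_pos _).le h2

/-- the bivariate density -/
def gp (b ρ x : ℝ) : ℝ := (2 * π * Real.sqrt (1 - ρ ^ 2))⁻¹ *
          Real.exp (-((x ^ 2 + b ^ 2 - 2 * ρ * x * b) / (2 * (1 - ρ ^ 2))))

lemma gp_deriv (b ρ x : ℝ) (hρ : ρ ∈ Set.Ioo (-1 : ℝ) 1) :
    HasDerivAt (gp b ρ) (gaussianPDFReal 0 1 x *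
      (gaussianPDFReal 0 1 ((b - ρ * x) / Real.sqrt (1 - ρ ^ 2)) *
        ((b * ρ - x) / Real.sqrt (1 - ρ ^ 2) ^ 3))) x := by
  have h0 : 0 < 1 - ρ ^ 2 := by nlinarith [hρ.1, hρ.2]
  have hs : 0 < Real.sqrt (1 - ρ ^ 2) := Real.sqrt_pos.2 h0
  have hq := Real.sq_sqrt h0.le
  have h1 : HasDerivAt (fun x : ℝ => -((x ^ 2 + b ^ 2 - 2 * ρ * x * b) / (2 * (1 - ρ ^ 2))))
      (-((2 * x - 2 * ρ * b) / (2 * (1 - ρ ^ 2)))) x := by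
    have ha : HasDerivAt (fun x : ℝ => x ^ 2 + b ^ 2 - 2 * ρ * x * b) (2 * x - 2 * ρ * b) x := by
      have := ((hasDerivAt_pow 2 x).add_const (b ^ 2)).sub
        (((hasDerivAt_id x).const_mul (2 * ρ)).mul_const b)
      refine this.congr_deriv ?_
      simp
    exact (ha.div_const _).neg
  have h2 := h1.exp.const_mul ((2 * π * Real.sqrt (1 - ρ ^ 2))⁻¹)
  refine h2.congr_deriv ?_
  rw [gaussianPDFReal_def]
  simp only [NNReal.coe_one, mul_one, sub_zero]
  have he : rexp (-((x ^ 2 + b ^ 2 - 2 * ρ * x * b) / (2 * (1 - ρ ^ 2)))) =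
      rexp (-x ^ 2 / 2) * rexp (-((b - ρ * x) / √(1 - ρ ^ 2)) ^ 2 / 2) := by
    rw [← Real.exp_add]
    congr 1
    rw [div_pow, hq]
    field_simp
    ring
  rw [he]
  have hp : √(2 * π) ^ 2 = 2 * π := Real.sq_sqrt (by positivity)
  have hp0 : 0 < √(2 * π) := by positivity
  rw [← hp]
  generalize rexp (-x ^ 2 / 2) = A
  generalize rexp (-((b - ρ * x) / √(1 - ρ ^ 2)) ^ 2 / 2) = B
  generalize √(2 * π) = c at *
  rw [Real.sqrt_sq hp0.le]
  rw [← hq]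
  rw [Real.sqrt_sq hs.le]
  generalize √(1 - ρ ^ 2) = s at *
  field_simp
  ring

lemma gp_tendsto (b ρ : ℝ) (hρ : ρ ∈ Set.Ioo (-1 : ℝ) 1) :
    Filter.Tendsto (gp b ρ) Filter.atBot (nhds 0) := by
  have h0 : 0 < 1 - ρ ^ 2 := by nlinarith [hρ.1, hρ.2]
  unfold gp
  rw [← mul_zero (2 * π * Real.sqrt (1 - ρ ^ 2))⁻¹]
  apply Filter.Tendsto.const_mul
  apply Real.tendsto_exp_atBot.comp
  apply Filter.tendsto_neg_atTop_atBot.comp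
  apply Filter.Tendsto.atTop_div_const (by positivity)
  have : Filter.Tendsto (fun x : ℝ => x * (x - 2 * ρ * b) + b ^ 2) Filter.atBot Filter.atTop := by
    apply Filter.tendsto_atTop_add_const_right
    apply Filter.Tendsto.atBot_mul_atBot₀ Filter.tendsto_id
    exact Filter.tendsto_atBot_add_const_right _ _ Filter.tendsto_id
  refine this.congr fun x => by ring

lemma g_int_id : Integrable (fun x : ℝ => x) (gaussianReal 0 1) := by
  have := memLp_id_gaussianReal (μ := 0) (v := 1) 1
  exact this.integrable (by simp)

lemma g_setint (a : ℝ) (f : ℝ → ℝ) : ∫ x in Set.Iic a, f x ∂(gaussianReal 0 1) =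
    ∫ x in Set.Iic a, gaussianPDFReal 0 1 x * f x := by
  rw [gaussianReal_of_var_ne_zero 0 one_ne_zero, setIntegral_withDensity_eq_setIntegral_toReal_smul
    (measurable_gaussianPDF 0 1) (ae_of_all _ fun _ => gaussianPDF_lt_top) _ measurableSet_Iic]
  simp [toReal_gaussianPDF]

lemma g_int_dens (f : ℝ → ℝ) (hf : Integrable f (gaussianReal 0 1)) :
    Integrable (fun x => gaussianPDFReal 0 1 x * f x) := by
  rw [gaussianReal_of_var_ne_zero 0 one_ne_zero,
    integrable_withDensity_iff_integrable_smul' (measurable_gaussianPDF 0 1)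
      (ae_of_all _ fun _ => gaussianPDF_lt_top)] at hf
  simpa [toReal_gaussianPDF] using hf

lemma gF_deriv (a b ρ : ℝ) (hρ : ρ ∈ Set.Ioo (-1 : ℝ) 1) :
    HasDerivAt (gF a b) (gp b ρ a) ρ := by
  obtain ⟨c, hc1, hc2⟩ : ∃ c, |ρ| < c ∧ c < 1 := exists_between (abs_lt.2 hρ)
  have hc0 : 0 ≤ c := (abs_nonneg ρ).trans hc1.le
  have hmem : Set.Ioo (-c) c ∈ nhds ρ := Ioo_mem_nhds (abs_lt.1 hc1).1 (abs_lt.1 hc1).2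
  have hsub : ∀ r ∈ Set.Ioo (-c) c, r ∈ Set.Ioo (-1 : ℝ) 1 := fun r hr =>
    ⟨by linarith [hr.1], by linarith [hr.2]⟩
  have hcs : 0 < 1 - c ^ 2 := by nlinarith
  have hk : 0 < √(1 - c ^ 2) := Real.sqrt_pos.2 hcs
  have hΦ : Continuous gPhi := continuous_iff_continuousAt.2 fun t => (gPhi_deriv t).continuousAt
  have hΦ1 : ∀ t, ‖gPhi t‖ ≤ 1 := fun t => by
    unfold gPhi
    rw [Real.norm_of_nonneg measureReal_nonneg]
    exact measureReal_le_one
  have hbI : Integrable (fun x : ℝ => (|b| + |x|) / √(1 - c ^ 2) ^ 3) (gaussianReal 0 1) :=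
    ((integrable_const _).add g_int_id.abs).div_const _
  have hbd : ∀ x : ℝ, ∀ r ∈ Set.Ioo (-c) c,
      ‖gaussianPDFReal 0 1 ((b - r * x) / √(1 - r ^ 2)) * ((b * r - x) / √(1 - r ^ 2) ^ 3)‖
        ≤ (|b| + |x|) / √(1 - c ^ 2) ^ 3 := by
    intro x r hr
    have hrr := hsub r hr
    have hle : √(1 - c ^ 2) ≤ √(1 - r ^ 2) := Real.sqrt_le_sqrt (by nlinarith [hr.1, hr.2])
    rw [norm_mul, Real.norm_of_nonneg (gaussianPDFReal_nonneg _ _ _), norm_div,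
      Real.norm_of_nonneg (r := √(1 - r ^ 2) ^ 3) (by positivity)]
    have h1 : ‖b * r - x‖ ≤ |b| + |x| := by
      calc ‖b * r - x‖ ≤ ‖b * r‖ + ‖x‖ := norm_sub_le _ _
        _ ≤ |b| + |x| := by
          have : |r| ≤ 1 := (abs_lt.2 hrr).le
          rw [norm_mul]
          simp only [Real.norm_eq_abs]
          nlinarith [abs_nonneg b]
    calc _ ≤ 1 * (‖b * r - x‖ / √(1 - r ^ 2) ^ 3) := by
          gcongr; exact gpdf_le _
      _ ≤ _ := by rw [one_mul]; gcongr
  have hm : Measurable (fun x : ℝ => gaussianPDFReal 0 1 ((b - ρ * x) / √(1 - ρ ^ 2)) *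
      ((b * ρ - x) / √(1 - ρ ^ 2) ^ 3)) := by
    have := gpdf_cont.measurable
    fun_prop
  have key := hasDerivAt_integral_of_dominated_loc_of_deriv_le
    (μ := (gaussianReal 0 1).restrict (Set.Iic a))
    (F := fun r x => gPhi ((b - r * x) / √(1 - r ^ 2)))
    (F' := fun r x => gaussianPDFReal 0 1 ((b - r * x) / √(1 - r ^ 2)) *
      ((b * r - x) / √(1 - r ^ 2) ^ 3))
    (bound := fun x => (|b| + |x|) / √(1 - c ^ 2) ^ 3)
    hmem
    (Filter.Eventually.of_forall fun r => by
      have := hΦ.measurable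
      exact Measurable.aestronglyMeasurable (by fun_prop))
    (Integrable.of_bound (by
      have := hΦ.measurable
      exact Measurable.aestronglyMeasurable (by fun_prop)) 1 (ae_of_all _ fun x => hΦ1 _))
    hm.aestronglyMeasurable
    (ae_of_all _ hbd)
    hbI.restrict
    (ae_of_all _ fun x r hr => (gPhi_deriv _).comp r (g_inner_deriv b x r (hsub r hr)))
  have h2 := key.2
  rw [g_setint] at h2
  have hint : Integrable (fun x : ℝ => gaussianPDFReal 0 1 x *
      (gaussianPDFReal 0 1 ((b - ρ * x) / √(1 - ρ ^ 2)) *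
      ((b * ρ - x) / √(1 - ρ ^ 2) ^ 3))) := by
    apply g_int_dens
    exact hbI.mono' hm.aestronglyMeasurable (ae_of_all _ fun x => hbd x ρ (abs_lt.1 hc1))
  rw [integral_Iic_of_hasDerivAt_of_tendsto' (fun x _ => gp_deriv b ρ x hρ) hint.integrableOn
    (gp_tendsto b ρ hρ), sub_zero] at h2
  apply h2.congr_of_eventuallyEq
  filter_upwards [hmem] with r hr
  exact gF_eq a b r (hsub r hr)

lemma gp_nonneg (b ρ x : ℝ) : 0 ≤ gp b ρ x := by unfold gp; positivity

lemma gF_int (a b ρ : ℝ) (hρ : ρ ∈ Set.Icc (-1 : ℝ) 1) :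
    ∫ r in (0:ℝ)..ρ, gp b r a = gF a b ρ - gF a b 0 := by
  have hu : Set.uIcc 0 ρ ⊆ Set.Icc (-1 : ℝ) 1 :=
    Set.uIcc_subset_Icc ⟨by norm_num, by norm_num⟩ hρ
  have hI : Set.Ioo (min 0 ρ) (max 0 ρ) ⊆ Set.Ioo (-1 : ℝ) 1 := by
    apply Set.Ioo_subset_Ioo
    · exact le_min (by norm_num) hρ.1
    · exact max_le (by norm_num) hρ.2
  have hc := (gF_cont a b).mono hu
  have hd : ∀ r ∈ Set.Ioo (min 0 ρ) (max 0 ρ), HasDerivAt (gF a b) (gp b r a) r :=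
    fun r hr => gF_deriv a b r (hI hr)
  have hi := intervalIntegral.intervalIntegrable_deriv_of_nonneg hc hd
    (fun r _ => gp_nonneg _ _ _)
  exact intervalIntegral.integral_eq_sub_of_hasDeriv_right hc
    (fun r hr => (hd r hr).hasDerivWithinAt) hi

lemma gF_zero (a b : ℝ) : gF a b 0 = gPhi a * gPhi b := by
  rw [gF_eq a b 0 ⟨by norm_num, by norm_num⟩]
  simp [gPhi]

/-- If `(X, Y)` is bivariate normal with standard normal marginals and
correlation `ρ ∈ [−1, 1]`, then for all `a, b ∈ ℝ`,
`Cov(1{X ≤ a}, 1{Y ≤ b}) = ∫₀^ρ (2π√(1−r²))⁻¹ exp(−(a²+b²−2rab)/(2(1−r²))) dr`.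
The joint normality is expressed by saying that `(X, Y)` has the law of
`(Z₁, ρ Z₁ + √(1−ρ²) Z₂)` for independent standard normal `Z₁, Z₂`. -/
theorem cov_indicator_bivariate_gaussian
    {Ω : Type*} [MeasureSpace Ω] [IsProbabilityMeasure (volume : Measure Ω)]
    (X Y : Ω → ℝ) (hX : Measurable X) (hY : Measurable Y)
    (ρ : ℝ) (hρ : ρ ∈ Set.Icc (-1 : ℝ) 1)
    (hlaw : Measure.map (fun ω => (X ω, Y ω)) volume =
      Measure.map (fun z : ℝ × ℝ => (z.1, ρ * z.1 + Real.sqrt (1 - ρ ^ 2) * z.2))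
        ((gaussianReal 0 1).prod (gaussianReal 0 1)))
    (a b : ℝ) :
    cov (fun ω => if X ω ≤ a then (1 : ℝ) else 0)
        (fun ω => if Y ω ≤ b then (1 : ℝ) else 0) =
      ∫ r in (0 : ℝ)..ρ,
        (2 * π * Real.sqrt (1 - r ^ 2))⁻¹ *
          Real.exp (-((a ^ 2 + b ^ 2 - 2 * r * a * b) / (2 * (1 - r ^ 2)))) := by
  have hm : Measurable (fun ω => (X ω, Y ω)) := hX.prodMk hY
  have e1 : (∫ ω, (if X ω ≤ a then (1 : ℝ) else 0) * (if Y ω ≤ b then (1 : ℝ) else 0))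
      = gF a b ρ := by
    have hg : Measurable (fun z : ℝ × ℝ => (if z.1 ≤ a then (1 : ℝ) else 0) *
        (if z.2 ≤ b then (1 : ℝ) else 0)) := by
      apply Measurable.mul
      · exact Measurable.ite (measurableSet_le (by fun_prop) (by fun_prop))
          (by fun_prop) (by fun_prop)
      · exact Measurable.ite (measurableSet_le (by fun_prop) (by fun_prop))
          (by fun_prop) (by fun_prop)
    have := integral_map (μ := volume) hm.aemeasurable hg.aestronglyMeasurable
    rw [hlaw, integral_map (by fun_prop) hg.aestronglyMeasurable] at this
    exact this.symm
  have hi : ∀ t : ℝ, Measurable (fun x : ℝ => if x ≤ t then (1 : ℝ) else 0) := fun t =>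
    Measurable.ite measurableSet_Iic measurable_const measurable_const
  have lX : Measure.map X volume = gaussianReal 0 1 := by
    have h := congrArg (Measure.map Prod.fst) hlaw
    rw [Measure.map_map measurable_fst hm, Measure.map_map measurable_fst (by fun_prop)] at h
    have h' : Measure.map X volume = Measure.map Prod.fst
      ((gaussianReal 0 1).prod (gaussianReal 0 1)) := h
    rw [h', Measure.map_fst_prod]
    simp
  have lY : Measure.map Y volume = gaussianReal 0 1 := by
    have h := congrArg (Measure.map Prod.snd) hlaw
    rw [Measure.map_map measurable_snd hm, Measure.map_map measurable_snd (by fun_prop)] at h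
    exact h.trans (g_law ρ hρ)
  have e2 : (∫ ω, (if X ω ≤ a then (1 : ℝ) else 0)) = gPhi a := by
    have := integral_map (μ := volume) hX.aemeasurable (hi a).aestronglyMeasurable
    rw [lX, g_ite_le] at this
    exact this.symm
  have e3 : (∫ ω, (if Y ω ≤ b then (1 : ℝ) else 0)) = gPhi b := by
    have := integral_map (μ := volume) hY.aemeasurable (hi b).aestronglyMeasurable
    rw [lY, g_ite_le] at this
    exact this.symm
  have := gF_int a b ρ hρ
  rw [gF_zero] at this
  unfold cov
  rw [e1, e2, e3, ← this]
  rfl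

end
end

section
/- (Mehler covariance expansion.) Let g, h ∈ L²_φ and let (X,Y) be bivariate normal with standard N(0,1) marginals and Corr(X,Y) = ρ ∈ [−1,1]. Then Cov(g(X), h(Y)) = Σ_{m=1}^{∞} α_m[g] α_m[h] ρ^m, with the series converging. -/
open MeasureTheory ProbabilityTheory Matrix Real
open scoped BigOperators ENNReal NNReal

noncomputable section

/-- The `m`-th probabilists' Hermite polynomial `He_m`, evaluated at a real number. -/
def He (m : ℕ) (x : ℝ) : ℝ := Polynomial.aeval x (Polynomial.hermite m)

/-- The normalized Hermite polynomial `h_m = He_m / √(m!)`. -/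
def hnorm (m : ℕ) (x : ℝ) : ℝ := He m x / Real.sqrt (Nat.factorial m)

/-- The `m`-th Hermite coefficient `α_m[g] = E[g(Z) h_m(Z)]`, `Z ~ N(0,1)`. -/
def hermCoeff (g : ℝ → ℝ) (m : ℕ) : ℝ := ∫ z, g z * hnorm m z ∂(gaussianReal 0 1)

/-- The standard Gaussian measure. -/
abbrev gam : Measure ℝ := gaussianReal 0 1

/-- Hermite polynomials with real coefficients. -/
def Hr (m : ℕ) : Polynomial ℝ := (Polynomial.hermite m).map (Int.castRingHom ℝ)

lemma He_eq (m : ℕ) (x : ℝ) : He m x = (Hr m).eval x := by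
  simp [He, Hr, Polynomial.aeval_def, Polynomial.eval_map]

lemma Hr_zero : Hr 0 = 1 := by simp [Hr]

lemma Hr_succ (n : ℕ) :
    Hr (n + 1) = Polynomial.X * Hr n - Polynomial.derivative (Hr n) := by
  simp [Hr, Polynomial.hermite_succ, Polynomial.derivative_map]

lemma deriv_Hr_succ (n : ℕ) :
    Polynomial.derivative (Hr (n + 1)) = Polynomial.C ((n : ℝ) + 1) * Hr n := by
  induction n with
  | zero => simp [Hr_succ, Hr_zero]
  | succ n ih =>
    rw [Hr_succ (n + 1), Polynomial.derivative_sub, Polynomial.derivative_mul, ih,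
      Polynomial.derivative_mul, Hr_succ n]
    simp
    ring

lemma integrable_poly (p : Polynomial ℝ) : Integrable (fun x => p.eval x) gam := by
  induction p using Polynomial.induction_on' with
  | add p q hp hq =>
    simp only [Polynomial.eval_add]
    exact hp.add hq
  | monomial n a =>
    simp only [Polynomial.eval_monomial]
    refine Integrable.const_mul ?_ a
    have h := (memLp_id_gaussianReal (μ := 0) (v := 1) (n : ℝ≥0))
    have h2 := MemLp.integrable_norm_pow' (p := n) (by simpa using h)
    refine (integrable_norm_iff (by fun_prop)).1 ?_
    simpa using h2

lemma memLp_poly (p : Polynomial ℝ) : MemLp (fun x => p.eval x) 2 gam := by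
  rw [memLp_two_iff_integrable_sq (by fun_prop)]
  have h := integrable_poly (p ^ 2)
  simp only [Polynomial.eval_pow] at h
  exact h

lemma hasDerivAt_pdf (x : ℝ) :
    HasDerivAt (gaussianPDFReal 0 1) (-x * gaussianPDFReal 0 1 x) x := by
  have h : HasDerivAt (fun x : ℝ => -(x - 0) ^ 2 / (2 * ((1 : ℝ≥0) : ℝ))) (-x) x := by
    have := (((hasDerivAt_id x).sub_const 0).pow 2).neg.div_const (2 * ((1 : ℝ≥0) : ℝ))
    refine this.congr_deriv ?_
    simp
    ring
  have h2 := (h.exp).const_mul ((√(2 * π * ((1 : ℝ≥0) : ℝ)))⁻¹)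
  rw [gaussianPDFReal_def]
  refine h2.congr_deriv ?_
  ring

lemma integrable_pdf_mul (p : Polynomial ℝ) :
    Integrable (fun x => gaussianPDFReal 0 1 x * p.eval x) := by
  have h := integrable_poly p
  rw [gam, gaussianReal_of_var_ne_zero _ one_ne_zero,
    integrable_withDensity_iff_integrable_smul' (measurable_gaussianPDF _ _)
      (ae_of_all _ fun _ ↦ gaussianPDF_lt_top)] at h
  simpa using h

lemma stein (p : Polynomial ℝ) :
    ∫ x, x * p.eval x ∂gam = ∫ x, p.derivative.eval x ∂gam := by
  have h : ∫ x, (-x * gaussianPDFReal 0 1 x * p.eval x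
      + gaussianPDFReal 0 1 x * p.derivative.eval x) = 0 := by
    refine integral_eq_zero_of_hasDerivAt_of_integrable
      (f := fun x => gaussianPDFReal 0 1 x * p.eval x) (fun x => ?_) ?_ (integrable_pdf_mul p)
    · exact (hasDerivAt_pdf x).mul (p.hasDerivAt x)
    · convert integrable_pdf_mul (-Polynomial.X * p + p.derivative) using 2
      simp; ring
  have h1 : ∫ x, (p.derivative - Polynomial.X * p).eval x ∂gam = 0 := by
    rw [integral_gaussianReal_eq_integral_smul one_ne_zero]
    refine Eq.trans ?_ h
    congr 1; ext x; simp; ring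
  simp only [Polynomial.eval_sub] at h1
  rw [integral_sub (integrable_poly _) (integrable_poly _)] at h1
  simp only [Polynomial.eval_mul, Polynomial.eval_X] at h1
  linarith

lemma mehler_poly (a s x : ℝ) (has : a ^ 2 + s ^ 2 = 1) (n : ℕ) :
    ∫ y, (Hr n).eval (a * x + s * y) ∂gam = a ^ n * (Hr n).eval x := by
  have key : ∀ p : Polynomial ℝ,
      ∫ y, (Polynomial.X * p - p.derivative).eval (a * x + s * y) ∂gam
        = a * x * ∫ y, p.eval (a * x + s * y) ∂gam
          - a ^ 2 * ∫ y, p.derivative.eval (a * x + s * y) ∂gam := by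
    intro p
    set l : Polynomial ℝ := Polynomial.C (a * x) + Polynomial.C s * Polynomial.X with hl
    have hle : ∀ (q : Polynomial ℝ) (y : ℝ), q.eval (a * x + s * y) = (q.comp l).eval y := by
      intro q y; simp [hl, Polynomial.eval_comp]
    have hst := stein (p.comp l)
    have hd : (p.comp l).derivative = Polynomial.C s * p.derivative.comp l := by
      rw [Polynomial.derivative_comp]; simp [hl]
    rw [hd] at hst
    simp only [Polynomial.eval_mul, Polynomial.eval_C, integral_const_mul] at hst
    have e : ∀ y, (Polynomial.X * p - p.derivative).eval (a * x + s * y)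
        = (a * x) * (p.comp l).eval y + s * (Polynomial.X * p.comp l).eval y
          - (p.derivative.comp l).eval y := by
      intro y
      simp [hl, Polynomial.eval_comp]; ring
    simp_rw [e, hle]
    have hadd : Integrable (fun y => (a * x) * (p.comp l).eval y
        + s * (Polynomial.X * p.comp l).eval y) gam :=
      ((integrable_poly _).const_mul _).add ((integrable_poly _).const_mul _)
    rw [integral_sub hadd (integrable_poly _), integral_add ((integrable_poly _).const_mul _)
      ((integrable_poly _).const_mul _), integral_const_mul, integral_const_mul]
    simp only [Polynomial.eval_mul, Polynomial.eval_X]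
    rw [hst]
    have : a ^ 2 = 1 - s ^ 2 := by linarith
    rw [this]; ring
  induction n using Nat.strong_induction_on with
  | _ n ih =>
    match n with
    | 0 => simp [Hr_zero]
    | 1 =>
      rw [Hr_succ, key]; simp [Hr_zero]
    | n + 2 =>
      rw [Hr_succ, key, ih (n + 1) (by omega), deriv_Hr_succ]
      simp only [Polynomial.eval_mul, Polynomial.eval_C, Polynomial.eval_sub, Polynomial.eval_X,
        integral_const_mul]
      rw [ih n (by omega)]
      ring

lemma herm_ibp (m : ℕ) (p : Polynomial ℝ) :
    ∫ x, (Hr (m + 1)).eval x * p.eval x ∂gam = ∫ x, (Hr m).eval x * p.derivative.eval x ∂gam := by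
  have hst := stein (Hr m * p)
  have e : ∀ x, (Hr (m + 1)).eval x * p.eval x
      = (Polynomial.X * (Hr m * p)).eval x - ((Hr m).derivative * p).eval x := by
    intro x; simp [Hr_succ]; ring
  simp_rw [e]
  rw [integral_sub (integrable_poly _) (integrable_poly _)]
  have e2 : ∀ x, (Polynomial.X * (Hr m * p)).eval x = x * (Hr m * p).eval x := by
    intro x; simp
  simp_rw [e2]
  rw [hst, ← integral_sub (integrable_poly _) (integrable_poly _)]
  congr 1; ext x; simp

lemma herm_ortho (m n : ℕ) :
    ∫ x, (Hr m).eval x * (Hr n).eval x ∂gam = if m = n then (n.factorial : ℝ) else 0 := by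
  induction m generalizing n with
  | zero =>
    cases n with
    | zero => simp [Hr_zero]
    | succ n =>
      have := herm_ibp n 1
      simp [Hr_zero] at this ⊢
      exact this
  | succ m ih =>
    cases n with
    | zero =>
      rw [herm_ibp]; simp [Hr_zero]
    | succ n =>
      rw [herm_ibp, deriv_Hr_succ]
      simp only [Polynomial.eval_mul, Polynomial.eval_C]
      have : ∀ x, (Hr m).eval x * (((n : ℝ) + 1) * (Hr n).eval x)
        = ((n : ℝ) + 1) * ((Hr m).eval x * (Hr n).eval x) := fun x => by ring
      simp_rw [this]
      rw [integral_const_mul, ih]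
      by_cases h : m = n <;> simp [h, Nat.factorial_succ]

lemma hnorm_eq (m : ℕ) (x : ℝ) : hnorm m x = (Polynomial.C (√(m.factorial : ℝ))⁻¹ * Hr m).eval x := by
  simp [hnorm, He_eq]; ring

lemma memLp_hnorm (m : ℕ) : MemLp (hnorm m) 2 gam := by
  have := memLp_poly (Polynomial.C (√(m.factorial : ℝ))⁻¹ * Hr m)
  simpa only [← hnorm_eq] using this

lemma hnorm_ortho (m n : ℕ) :
    ∫ x, hnorm m x * hnorm n x ∂gam = if m = n then 1 else 0 := by
  have : ∀ x, hnorm m x * hnorm n x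
      = ((√(m.factorial : ℝ))⁻¹ * (√(n.factorial : ℝ))⁻¹) * ((Hr m).eval x * (Hr n).eval x) := by
    intro x; simp [hnorm, He_eq]; ring
  simp_rw [this]
  rw [integral_const_mul, herm_ortho]
  split_ifs with h
  · subst h
    rw [← mul_inv, Real.mul_self_sqrt (by positivity)]
    field_simp
  · simp

lemma integral_mul_pow_zero (f : ℝ → ℝ) (hf : MemLp f 2 gam)
    (h0 : ∀ n, ∫ x, f x * (Hr n).eval x ∂gam = 0) (k : ℕ) :
    ∫ x, f x * x ^ k ∂gam = 0 := by
  have hi : ∀ p : Polynomial ℝ, Integrable (fun x => f x * p.eval x) gam := fun p =>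
    hf.integrable_mul (memLp_poly p)
  have key : ∀ k n, ∫ x, f x * (Hr n * Polynomial.X ^ k).eval x ∂gam = 0 := by
    intro k
    induction k with
    | zero => intro n; simpa using h0 n
    | succ k ih =>
      intro n
      have e : ∀ x, f x * (Hr n * Polynomial.X ^ (k + 1)).eval x
          = f x * (Hr (n + 1) * Polynomial.X ^ k).eval x
            + f x * ((Hr n).derivative * Polynomial.X ^ k).eval x := by
        intro x; simp [Hr_succ]; ring
      simp_rw [e]
      rw [integral_add (hi _) (hi _), ih]
      cases n with
      | zero => simp [Hr_zero]
      | succ n =>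
        rw [deriv_Hr_succ]
        have e2 : ∀ x, f x * (Polynomial.C ((n : ℝ) + 1) * Hr n * Polynomial.X ^ k).eval x
          = ((n : ℝ) + 1) * (f x * (Hr n * Polynomial.X ^ k).eval x) := by
          intro x; simp; ring
        simp_rw [e2]
        rw [integral_const_mul, ih]; simp
  simpa [Hr_zero] using key k 0

lemma memLp_exp (t : ℝ) : MemLp (fun x => Real.exp (t * x)) 2 gam := by
  rw [memLp_two_iff_integrable_sq (by fun_prop)]
  convert integrable_exp_mul_gaussianReal (μ := 0) (v := 1) (2 * t) using 2
  rw [← Real.exp_nat_mul]; push_cast; ring_nf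

lemma memLp_exp_abs (t : ℝ) : MemLp (fun x => Real.exp (|t * x|)) 2 gam := by
  refine ((memLp_exp t).add (memLp_exp (-t))).mono (by fun_prop) (ae_of_all _ fun x => ?_)
  simp only [Pi.add_apply, Real.norm_eq_abs]
  rw [abs_of_pos (Real.exp_pos _), abs_of_pos (add_pos (Real.exp_pos (t * x)) (Real.exp_pos (-t * x)))]
  rcases abs_cases (t * x) with h | h <;> rw [h.1]
  · linarith [Real.exp_pos (-t * x)]
  · have : -(t * x) = -t * x := by ring
    rw [this]; linarith [Real.exp_pos (t * x)]

lemma integral_mul_cexp_zero (f : ℝ → ℝ) (hf : MemLp f 2 gam)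
    (h0 : ∀ k, ∫ x, f x * x ^ k ∂gam = 0) (t : ℝ) :
    ∫ x, (f x : ℂ) * Complex.exp (t * x * Complex.I) ∂gam = 0 := by
  have hF := hasSum_integral_of_dominated_convergence (μ := gam)
    (F := fun (n : ℕ) x => (f x : ℂ) * (((t : ℂ) * x * Complex.I) ^ n / (n.factorial : ℂ)))
    (f := fun x => (f x : ℂ) * Complex.exp (t * x * Complex.I))
    (fun n x => |f x| * (|t * x| ^ n / n.factorial)) ?_ ?_ ?_ ?_ ?_
  · have hz : ∀ n : ℕ, ∫ x, (f x : ℂ) * (((t : ℂ) * x * Complex.I) ^ n / (n.factorial : ℂ)) ∂gam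
        = 0 := by
      intro n
      have e : ∀ x, (f x : ℂ) * (((t : ℂ) * x * Complex.I) ^ n / (n.factorial : ℂ))
          = ((t * Complex.I) ^ n / (n.factorial : ℂ)) * ((f x * x ^ n : ℝ) : ℂ) := by
        intro x; push_cast; ring
      simp_rw [e]
      rw [integral_const_mul, integral_complex_ofReal, h0]; simp
    simp_rw [hz] at hF
    exact hF.unique hasSum_zero
  · intro n
    have := hf.1
    exact (Complex.continuous_ofReal.comp_aestronglyMeasurable this).mul
      (Continuous.aestronglyMeasurable (by fun_prop))
  · intro n
    refine ae_of_all _ fun x => ?_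
    simp [abs_mul]
  · exact ae_of_all _ fun x => (Real.summable_pow_div_factorial _).mul_left _
  · have : (fun x => ∑' n : ℕ, |f x| * (|t * x| ^ n / n.factorial))
        = fun x => |f x| * Real.exp |t * x| := by
      ext x
      rw [tsum_mul_left, Real.exp_eq_exp_ℝ, NormedSpace.exp_eq_tsum_div]
    rw [this]
    exact hf.abs.integrable_mul (memLp_exp_abs t)
  · refine ae_of_all _ fun x => HasSum.mul_left _ ?_
    rw [Complex.exp_eq_exp_ℂ]
    exact NormedSpace.expSeries_div_hasSum_exp _

lemma ae_zero_of_moments (f : ℝ → ℝ) (hf : MemLp f 2 gam)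
    (h0 : ∀ k, ∫ x, f x * x ^ k ∂gam = 0) : f =ᵐ[gam] 0 := by
  have hfi : Integrable f gam := hf.integrable (by norm_num)
  have hfn : Integrable (fun x => -f x) gam := hfi.neg
  have hfin : ∀ u : ℝ → ℝ, Integrable u gam →
      IsFiniteMeasure (gam.withDensity fun x => ENNReal.ofReal (u x)) := fun u hu =>
    isFiniteMeasure_withDensity_ofReal hu.2
  have := hfin f hfi
  have := hfin (fun x => -f x) hfi.neg
  have hexp : ∀ (u : ℝ → ℝ) (hu : Integrable u gam) (t : ℝ),
      charFun (gam.withDensity fun x => ENNReal.ofReal (u x)) t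
        = ∫ x, ((max (u x) 0 : ℝ) : ℂ) * Complex.exp (t * x * Complex.I) ∂gam := by
    intro u hu t
    rw [charFun_apply_real, integral_withDensity_eq_integral_toReal_smul₀
      hu.1.aemeasurable.ennreal_ofReal (ae_of_all _ fun _ => ENNReal.ofReal_lt_top)]
    congr 1
  have hint : ∀ (u : ℝ → ℝ) (hu : Integrable u gam) (t : ℝ),
      Integrable (fun x => ((max (u x) 0 : ℝ) : ℂ) * Complex.exp (t * x * Complex.I)) gam := by
    intro u hu t
    refine (hu.pos_part.ofReal (𝕜 := ℂ)).mul_bdd (c := 1)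
      (Continuous.aestronglyMeasurable (by fun_prop)) (ae_of_all _ fun x => ?_)
    have := Complex.norm_exp_ofReal_mul_I (t * x)
    push_cast at this
    exact this.le
  have heq : (gam.withDensity fun x => ENNReal.ofReal (f x))
      = gam.withDensity fun x => ENNReal.ofReal (-f x) := by
    refine Measure.ext_of_charFun ?_
    ext t
    rw [hexp f hfi, hexp (fun x => -f x) hfn, ← sub_eq_zero,
      ← integral_sub (hint f hfi t) (hint _ hfn t), ← integral_mul_cexp_zero f hf h0 t]
    congr 1; ext x
    rw [← sub_mul, ← Complex.ofReal_sub]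
    congr 2
    rcases le_total (f x) 0 with h | h
    · rw [max_eq_right h, max_eq_left (by linarith)]; ring
    · rw [max_eq_left h, max_eq_right (by linarith)]; ring
  rw [withDensity_eq_iff_of_sigmaFinite hfi.1.aemeasurable.ennreal_ofReal
    hfn.1.aemeasurable.ennreal_ofReal] at heq
  filter_upwards [heq] with x hx
  have := congrArg ENNReal.toReal hx
  simp only [ENNReal.toReal_ofReal'] at this
  simp only [Pi.zero_apply]
  rcases le_total (f x) 0 with h | h
  · rw [max_eq_right h, max_eq_left (by linarith)] at this; linarith
  · rw [max_eq_left h, max_eq_right (by linarith)] at this; linarith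

/-- The normalized Hermite polynomials as elements of `L²`. -/
def hLp (m : ℕ) : Lp ℝ 2 gam := (memLp_hnorm m).toLp _

lemma inner_toLp {α : Type*} [MeasurableSpace α] {μ : Measure α} {u v : α → ℝ}
    (hu : MemLp u 2 μ) (hv : MemLp v 2 μ) :
    inner ℝ (hu.toLp u) (hv.toLp v) = ∫ x, u x * v x ∂μ := by
  rw [L2.inner_def]
  refine integral_congr_ae ?_
  filter_upwards [hu.coeFn_toLp, hv.coeFn_toLp] with x h1 h2
  rw [h1, h2]; simp [mul_comm]

lemma hLp_orthonormal : Orthonormal ℝ hLp := by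
  rw [orthonormal_iff_ite]
  intro i j
  rw [hLp, hLp, inner_toLp, hnorm_ortho]

lemma hLp_complete : (Submodule.span ℝ (Set.range hLp))ᗮ = ⊥ := by
  rw [Submodule.eq_bot_iff]
  intro f hf
  have hfm := Lp.memLp f
  rw [Submodule.mem_orthogonal] at hf
  have h1 : ∀ n, ∫ x, f x * (Hr n).eval x ∂gam = 0 := by
    intro n
    have := hf (hLp n) (Submodule.subset_span ⟨n, rfl⟩)
    rw [hLp, ← Lp.toLp_coeFn f hfm, inner_toLp] at this
    have e : ∀ x, hnorm n x * f x = (√(n.factorial : ℝ))⁻¹ * (f x * (Hr n).eval x) := by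
      intro x; simp [hnorm, He_eq]; ring
    simp_rw [e] at this
    rw [integral_const_mul] at this
    rcases mul_eq_zero.1 this with h | h
    · exfalso
      have : (0 : ℝ) < √(n.factorial : ℝ) := Real.sqrt_pos.2 (by positivity)
      exact (inv_pos.2 this).ne' h
    · exact h
  have := ae_zero_of_moments f hfm (integral_mul_pow_zero f hfm h1)
  rw [Lp.eq_zero_iff_ae_eq_zero]
  exact this

/-- The Hermite Hilbert basis. -/
def hBasis : HilbertBasis ℕ ℝ (Lp ℝ 2 gam) :=
  HilbertBasis.mkOfOrthogonalEqBot hLp_orthonormal hLp_complete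

lemma hasSum_hLp {u : ℝ → ℝ} (hu : MemLp u 2 gam) :
    HasSum (fun m => hermCoeff u m • hLp m) (hu.toLp u) := by
  have := hBasis.hasSum_repr (hu.toLp u)
  convert this using 2 with m
  rw [HilbertBasis.repr_apply_apply, hBasis, HilbertBasis.coe_mkOfOrthogonalEqBot, hLp, inner_toLp,
    hermCoeff]
  simp_rw [mul_comm]

lemma mp_fst : MeasurePreserving (Prod.fst : ℝ × ℝ → ℝ) (gam.prod gam) gam :=
  measurePreserving_fst

lemma mp_comb (a s : ℝ) (has : a ^ 2 + s ^ 2 = 1) :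
    MeasurePreserving (fun z : ℝ × ℝ => a * z.1 + s * z.2) (gam.prod gam) gam := by
  refine ⟨by fun_prop, ?_⟩
  have hind : IndepFun (fun z : ℝ × ℝ => a * z.1) (fun z : ℝ × ℝ => s * z.2) (gam.prod gam) :=
    indepFun_prod (X := fun x : ℝ => a * x) (Y := fun x : ℝ => s * x) (by fun_prop) (by fun_prop)
  have h1 : (gam.prod gam).map (fun z : ℝ × ℝ => a * z.1)
      = gaussianReal (a * 0) (NNReal.mk (a ^ 2) (sq_nonneg _) * 1) := by
    have hm := Measure.map_map (μ := gam.prod gam) (g := fun x : ℝ => a * x) (f := Prod.fst)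
      (by fun_prop) (by fun_prop)
    rw [(measurePreserving_fst (μ := gam) (ν := gam)).map_eq] at hm
    rw [← gaussianReal_map_const_mul]
    exact hm.symm
  have h2 : (gam.prod gam).map (fun z : ℝ × ℝ => s * z.2)
      = gaussianReal (s * 0) (NNReal.mk (s ^ 2) (sq_nonneg _) * 1) := by
    have hm := Measure.map_map (μ := gam.prod gam) (g := fun x : ℝ => s * x) (f := Prod.snd)
      (by fun_prop) (by fun_prop)
    rw [(measurePreserving_snd (μ := gam) (ν := gam)).map_eq] at hm
    rw [← gaussianReal_map_const_mul]
    exact hm.symm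
  have h3 := gaussianReal_add_gaussianReal_of_indepFun hind h1 h2
  have e : (fun z : ℝ × ℝ => a * z.1) + (fun z : ℝ × ℝ => s * z.2)
      = fun z : ℝ × ℝ => a * z.1 + s * z.2 := rfl
  rw [e] at h3
  rw [h3]
  congr 1
  · ring
  · ext; simpa using has

lemma mehler_hnorm (a s : ℝ) (has : a ^ 2 + s ^ 2 = 1) (m n : ℕ) :
    ∫ z, hnorm m z.1 * hnorm n (a * z.1 + s * z.2) ∂(gam.prod gam)
      = if m = n then a ^ n else 0 := by
  have hi : Integrable (fun z : ℝ × ℝ => hnorm m z.1 * hnorm n (a * z.1 + s * z.2))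
      (gam.prod gam) :=
    ((memLp_hnorm m).comp_measurePreserving mp_fst).integrable_mul
      ((memLp_hnorm n).comp_measurePreserving (mp_comb a s has))
  rw [integral_prod _ hi]
  have e : ∀ x, ∫ y, hnorm m x * hnorm n (a * x + s * y) ∂gam
      = a ^ n * (hnorm m x * hnorm n x) := by
    intro x
    rw [integral_const_mul]
    have : ∫ y, hnorm n (a * x + s * y) ∂gam = a ^ n * hnorm n x := by
      simp only [hnorm, He_eq]
      rw [integral_div, mehler_poly a s x has]; ring
    rw [this]; ring
  simp only [e]
  rw [integral_const_mul, hnorm_ortho]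
  simp

lemma mehler_full (a s : ℝ) (has : a ^ 2 + s ^ 2 = 1) {g h : ℝ → ℝ}
    (hg : MemLp g 2 gam) (hh : MemLp h 2 gam) :
    HasSum (fun m => hermCoeff g m * hermCoeff h m * a ^ m)
      (∫ z, g z.1 * h (a * z.1 + s * z.2) ∂(gam.prod gam)) := by
  have mpc := mp_comb a s has
  let A := Lp.compMeasurePreservingₗᵢ (E := ℝ) (p := 2) ℝ _ mp_fst
  let B := Lp.compMeasurePreservingₗᵢ (E := ℝ) (p := 2) ℝ _ mpc
  have hin : ∀ {u v : ℝ → ℝ} (hu : MemLp u 2 gam) (hv : MemLp v 2 gam),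
      inner ℝ (A (hu.toLp u)) (B (hv.toLp v))
        = ∫ z, u z.1 * v (a * z.1 + s * z.2) ∂(gam.prod gam) := by
    intro u v hu hv
    have e1 : A (hu.toLp u) = (hu.comp_measurePreserving mp_fst).toLp _ :=
      Lp.toLp_compMeasurePreserving hu mp_fst
    have e2 : B (hv.toLp v) = (hv.comp_measurePreserving mpc).toLp _ :=
      Lp.toLp_compMeasurePreserving hv mpc
    rw [e1, e2, inner_toLp]
    rfl
  have hbas : ∀ m n, inner ℝ (A (hLp m)) (B (hLp n)) = if m = n then a ^ n else 0 := by
    intro m n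
    rw [hLp, hLp, hin, mehler_hnorm a s has]
  have hleft : ∀ m, inner ℝ (A (hLp m)) (B (hh.toLp h)) = hermCoeff h m * a ^ m := by
    intro m
    have h1 := ((innerSL ℝ (A (hLp m))).comp B.toContinuousLinearMap).hasSum (hasSum_hLp hh)
    have h2 : HasSum (fun n => hermCoeff h n * (if m = n then a ^ n else 0))
        (inner ℝ (A (hLp m)) (B (hh.toLp h))) := by
      have h3 : HasSum (fun n => inner ℝ (A (hLp m)) (B (hermCoeff h n • hLp n)))
        (inner ℝ (A (hLp m)) (B (hh.toLp h))) := h1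
      simpa only [map_smul, inner_smul_right, hbas] using h3
    refine h2.unique ?_
    convert hasSum_single m ?_ using 1
    · simp
    · intro n hn; simp [hn.symm]
  have h1 := ((innerSL ℝ (B (hh.toLp h))).comp A.toContinuousLinearMap).hasSum (hasSum_hLp hg)
  rw [← hin hg hh]
  have h2 : HasSum (fun m => inner ℝ (B (hh.toLp h)) (A (hermCoeff g m • hLp m)))
      (inner ℝ (B (hh.toLp h)) (A (hg.toLp g))) := h1
  rw [real_inner_comm] at h2
  convert h2 using 2 with m
  rw [map_smul, inner_smul_right, real_inner_comm, hleft, mul_assoc]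

/-- **Mehler covariance expansion.** For `g, h ∈ L²_φ` and `(X, Y)` bivariate
normal with standard normal marginals and correlation `ρ ∈ [−1, 1]`,
`Cov(g(X), h(Y)) = Σ_{m≥1} α_m[g] α_m[h] ρ^m`, the series converging. -/
theorem mehler_covariance_expansion
    {Ω : Type*} [MeasureSpace Ω] [IsProbabilityMeasure (volume : Measure Ω)]
    (g h : ℝ → ℝ) (hgm : Measurable g) (hhm : Measurable h)
    (hg : MemLp g 2 (gaussianReal 0 1)) (hh : MemLp h 2 (gaussianReal 0 1))
    (X Y : Ω → ℝ) (hX : Measurable X) (hY : Measurable Y)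
    (ρ : ℝ) (hρ : ρ ∈ Set.Icc (-1 : ℝ) 1)
    (hlaw : Measure.map (fun ω => (X ω, Y ω)) volume =
      Measure.map (fun z : ℝ × ℝ => (z.1, ρ * z.1 + Real.sqrt (1 - ρ ^ 2) * z.2))
        ((gaussianReal 0 1).prod (gaussianReal 0 1))) :
    HasSum (fun m : ℕ => hermCoeff g (m + 1) * hermCoeff h (m + 1) * ρ ^ (m + 1))
      (cov (fun ω => g (X ω)) (fun ω => h (Y ω))) := by
  have has : ρ ^ 2 + (Real.sqrt (1 - ρ ^ 2)) ^ 2 = 1 := by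
    rw [Real.sq_sqrt (by nlinarith [hρ.1, hρ.2])]; ring
  have mpc := mp_comb ρ _ has
  have htr : ∀ F : ℝ × ℝ → ℝ, Measurable F → ∫ ω, F (X ω, Y ω)
      = ∫ z, F (z.1, ρ * z.1 + Real.sqrt (1 - ρ ^ 2) * z.2) ∂(gam.prod gam) := by
    intro F hF
    rw [← integral_map (φ := fun ω => (X ω, Y ω)) (by fun_prop) hF.aestronglyMeasurable, hlaw,
      integral_map (by fun_prop) hF.aestronglyMeasurable]
  have h1 : ∫ ω, g (X ω) * h (Y ω)
      = ∫ z, g z.1 * h (ρ * z.1 + Real.sqrt (1 - ρ ^ 2) * z.2) ∂(gam.prod gam) :=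
    htr (fun p => g p.1 * h p.2) (by fun_prop)
  have h2 : ∫ ω, g (X ω) = hermCoeff g 0 := by
    rw [htr (fun p => g p.1) (by fun_prop)]
    have := integral_map (μ := gam.prod gam) (φ := Prod.fst) (f := g) (by fun_prop)
      hgm.aestronglyMeasurable
    rw [mp_fst.map_eq] at this
    simp [hermCoeff, hnorm, He, this]
  have h3 : ∫ ω, h (Y ω) = hermCoeff h 0 := by
    rw [htr (fun p => h p.2) (by fun_prop)]
    have := integral_map (μ := gam.prod gam)
      (φ := fun z : ℝ × ℝ => ρ * z.1 + Real.sqrt (1 - ρ ^ 2) * z.2) (f := h) (by fun_prop)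
      hhm.aestronglyMeasurable
    rw [mpc.map_eq] at this
    simp [hermCoeff, hnorm, He, this]
  have hfull := mehler_full ρ _ has hg hh
  rw [← h1] at hfull
  rw [cov, h2, h3]
  have := (hasSum_nat_add_iff' 1).2 hfull
  simpa using this

end
end
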